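/- Let σ_1,…,σ_n : Ω → H be a (k+1)-nondegenerate holomorphic frame, k ≥ 1. Then the curvature coefficient of the k-jet bundle K(z) := ∂/∂z̄ ( (J_k h)⁻¹ · ∂(J_k h)/∂z )(z), a (k+1)n×(k+1)n matrix, has rank at most n for every z ∈ Ω. -/

import Mathlib

open Matrix

noncomputable section

/-- Wirtinger derivative `∂g/∂z := (1/2)(∂g/∂x − i·∂g/∂y)`. -/
def Dz {E : Type*} [NormedAddCommGroup E] [NormedSpace ℂ E] (g : ℂ → E) (z : ℂ) : E :=
  (1 / 2 : ℂ) • (fderiv ℝ g z 1 - Complex.I • fderiv ℝ g z Complex.I)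

/-- Wirtinger derivative `∂g/∂z̄ := (1/2)(∂g/∂x + i·∂g/∂y)`. -/
def Dzbar {E : Type*} [NormedAddCommGroup E] [NormedSpace ℂ E] (g : ℂ → E) (z : ℂ) : E :=
  (1 / 2 : ℂ) • (fderiv ℝ g z 1 + Complex.I • fderiv ℝ g z Complex.I)

/-- Entrywise Wirtinger derivative `∂/∂z` of a matrix-valued function. -/
def mDz {ι : Type*} (M : ℂ → Matrix ι ι ℂ) (z : ℂ) : Matrix ι ι ℂ :=
  Matrix.of fun i j => Dz (fun w => M w i j) z

/-- Entrywise Wirtinger derivative `∂/∂z̄` of a matrix-valued function. -/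
def mDzbar {ι : Type*} (M : ℂ → Matrix ι ι ℂ) (z : ℂ) : Matrix ι ι ℂ :=
  Matrix.of fun i j => Dzbar (fun w => M w i j) z

variable {H : Type*} [NormedAddCommGroup H] [InnerProductSpace ℂ H] [CompleteSpace H]

/-- `⟪x, y⟫` is the Mathlib inner product (conjugate-linear in the first argument);
it equals the paper's inner product `⟨y, x⟩`, which is linear in the first argument. -/
local notation "⟪" x ", " y "⟫" => (inner ℂ x y : ℂ)

/-- `jGram σ N z` is the Gram matrix of the family
`(σ_1(z),…,σ_n(z), σ_1′(z),…,σ_n′(z),…,σ_1^{(N−1)}(z),…,σ_n^{(N−1)}(z))`, with `(a,b)` entry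
equal to `⟨b-th vector, a-th vector⟩_paper = ⟪a-th vector, b-th vector⟫`.  The jet Gram matrix
`J_k h` of the paper is `jGram σ (k+1)`. -/
def jGram {n : ℕ} (σ : Fin n → ℂ → H) (N : ℕ) (z : ℂ) :
    Matrix (Fin N × Fin n) (Fin N × Fin n) ℂ :=
  Matrix.of fun p q =>
    ⟪iteratedDeriv (p.1 : ℕ) (σ p.2) z, iteratedDeriv (q.1 : ℕ) (σ q.2) z⟫

/-- `hMat σ m z` is the paper's matrix `h_m(z)`: its `(i,j)` entry is the determinant of the
`(nm+1)×(nm+1)` matrix whose `(a,b)` entry is `⟨u_b, v_a⟩_paper = ⟪v_a, u_b⟫`, where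
`u` is the family `(σ_1(z),…,σ_n^{(m−1)}(z))` followed by `σ_j^{(m)}(z)` and `v` is the same
family followed by `σ_i^{(m)}(z)`.  (For `m = 0` this is the Gram matrix `h_0 = J_0 h`.) -/
def hMat {n : ℕ} (σ : Fin n → ℂ → H) (m : ℕ) (z : ℂ) : Matrix (Fin n) (Fin n) ℂ :=
  Matrix.of fun i j =>
    (Matrix.of fun a b : (Fin m × Fin n) ⊕ Unit =>
      ⟪Sum.elim (fun lp : Fin m × Fin n => iteratedDeriv (lp.1 : ℕ) (σ lp.2) z)
          (fun _ => iteratedDeriv m (σ i) z) a,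
        Sum.elim (fun lp : Fin m × Fin n => iteratedDeriv (lp.1 : ℕ) (σ lp.2) z)
          (fun _ => iteratedDeriv m (σ j) z) b⟫).det

/-!
Near a point where the frame `e` is holomorphic and linearly independent, with Gram matrix `G`, the
`q`-th column of `G⁻¹ * ∂G/∂z` lists the coordinates in `e` of the orthogonal projection of `e_q'`
onto the span of `e`. In the frame of a `k`-jet bundle the derivative of a vector of order below `k`
is again a frame vector, so its column is a constant unit vector and is annihilated by `∂/∂z̄`.
Only the `n` columns belonging to the vectors of order `k` can survive in the curvature.
-/

open scoped Topology

section Wirtinger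

theorem Dzbar_eq_zero_of_differentiableAt {F : Type*} [NormedAddCommGroup F] [NormedSpace ℂ F]
    {g : ℂ → F} {z : ℂ} (hg : DifferentiableAt ℂ g z) : Dzbar g z = 0 := by
  have hI : fderiv ℂ g z Complex.I = Complex.I • fderiv ℂ g z 1 := by
    rw [← map_smul, smul_eq_mul, mul_one]
  rw [Dzbar, hg.fderiv_restrictScalars ℝ, ContinuousLinearMap.coe_restrictScalars', hI, smul_smul,
    Complex.I_mul_I, neg_one_smul, add_neg_cancel, smul_zero]

variable {E : Type*} [NormedAddCommGroup E] [InnerProductSpace ℂ E]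

theorem fderiv_real_inner_apply {f g : ℂ → E} {z : ℂ}
    (hf : DifferentiableAt ℂ f z) (hg : DifferentiableAt ℂ g z) (v : ℂ) :
    fderiv ℝ (fun w => ⟪f w, g w⟫) z v = v * ⟪f z, deriv g z⟫ + star v * ⟪deriv f z, g z⟫ := by
  rw [fderiv_inner_apply ℂ (hf.restrictScalars ℝ) (hg.restrictScalars ℝ),
    hf.fderiv_restrictScalars ℝ, hg.fderiv_restrictScalars ℝ]
  simp only [ContinuousLinearMap.coe_restrictScalars', fderiv_eq_smul_deriv, inner_smul_left,
    inner_smul_right, starRingEnd_apply]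

theorem Dz_inner {f g : ℂ → E} {z : ℂ}
    (hf : DifferentiableAt ℂ f z) (hg : DifferentiableAt ℂ g z) :
    Dz (fun w => ⟪f w, g w⟫) z = ⟪f z, deriv g z⟫ := by
  simp only [Dz, fderiv_real_inner_apply hf hg, Complex.star_def,
    Complex.conj_I, map_one, smul_eq_mul]
  linear_combination (⟪deriv f z, g z⟫ - ⟪f z, deriv g z⟫) / 2 * Complex.I_mul_I

end Wirtinger

section ChernCurvature

/-- The coefficient matrix of the connection form `G⁻¹ ∂G` of the Chern connection of a holomorphic
vector bundle whose Hermitian metric has Gram matrix `G` in a holomorphic frame. Where `G` is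
singular, `(G z)⁻¹` is the junk value `0`. -/
def chernConnection {ι : Type*} [Fintype ι] [DecidableEq ι] (G : ℂ → Matrix ι ι ℂ) (z : ℂ) :
    Matrix ι ι ℂ :=
  (G z)⁻¹ * mDz G z

/-- The coefficient matrix `∂/∂z̄ (G⁻¹ ∂G/∂z)` of the curvature of the Chern connection, without the
factor `dz̄ ∧ dz`. -/
def chernCurvature {ι : Type*} [Fintype ι] [DecidableEq ι] (G : ℂ → Matrix ι ι ℂ) (z : ℂ) :
    Matrix ι ι ℂ :=
  mDzbar (chernConnection G) z

variable {E ι : Type*} [NormedAddCommGroup E] [InnerProductSpace ℂ E]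
  {e : ℂ → ι → E} {z : ℂ} {i j : ι}

theorem mDz_gram_apply (hi : DifferentiableAt ℂ (e · i) z) (hj : DifferentiableAt ℂ (e · j) z) :
    mDz (fun w => gram ℂ (e w)) z i j = ⟪e z i, deriv (e · j) z⟫ :=
  Dz_inner hi hj

variable [Fintype ι] [DecidableEq ι]

theorem chernConnection_gram_col_of_deriv_eq (he : DifferentiableAt ℂ e z)
    (hli : LinearIndependent ℂ (e z)) (hij : deriv (e · i) z = e z j) :
    (chernConnection (fun w => gram ℂ (e w)) z).col i = (1 : Matrix ι ι ℂ).col j := by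
  have hcol : (mDz (fun w => gram ℂ (e w)) z).col i = (gram ℂ (e z)).col j := by
    ext p
    rw [col_apply, mDz_gram_apply (differentiableAt_pi.1 he p) (differentiableAt_pi.1 he i), hij,
      col_apply, gram_apply]
  have hdet : IsUnit (gram ℂ (e z)).det :=
    (det_gram_ne_zero_iff_linearIndependent.2 hli).isUnit
  calc (chernConnection (fun w => gram ℂ (e w)) z).col i
      = (gram ℂ (e z))⁻¹ *ᵥ (mDz (fun w => gram ℂ (e w)) z).col i := rfl
    _ = (gram ℂ (e z))⁻¹ *ᵥ (gram ℂ (e z)).col j := by rw [hcol]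
    _ = ((gram ℂ (e z))⁻¹ * gram ℂ (e z)).col j := rfl
    _ = (1 : Matrix ι ι ℂ).col j := by rw [nonsing_inv_mul _ hdet]

theorem chernCurvature_gram_col_eq_zero (he : ∀ᶠ w in 𝓝 z, DifferentiableAt ℂ e w)
    (hli : LinearIndependent ℂ (e z)) (hij : deriv (e · i) =ᶠ[𝓝 z] (e · j)) :
    (chernCurvature (fun w => gram ℂ (e w)) z).col i = 0 := by
  have hli_near : ∀ᶠ w in 𝓝 z, LinearIndependent ℂ (e w) :=
    he.self_of_nhds.continuousAt.eventually hli.eventually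
  ext p
  have hconst : (chernConnection (fun w => gram ℂ (e w)) · p i) =ᶠ[𝓝 z]
      fun _ => (1 : Matrix ι ι ℂ) p j := by
    filter_upwards [he, hli_near, hij] with w hew hliw hijw
    exact congrFun (chernConnection_gram_col_of_deriv_eq hew hliw hijw) p
  exact Dzbar_eq_zero_of_differentiableAt
    ((differentiableAt_const _).congr_of_eventuallyEq hconst)

theorem rank_chernCurvature_gram_le_card (he : ∀ᶠ w in 𝓝 z, DifferentiableAt ℂ e w)
    (hli : LinearIndependent ℂ (e z)) (s : Finset ι)
    (hs : ∀ i ∉ s, ∃ j, deriv (e · i) =ᶠ[𝓝 z] (e · j)) :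
    (chernCurvature (fun w => gram ℂ (e w)) z).rank ≤ s.card := by
  rw [← rank_transpose]
  refine rank_le_card_of_support_subset _ s (Function.support_subset_iff'.2 fun i hi => ?_)
  obtain ⟨j, hij⟩ := hs i hi
  exact chernCurvature_gram_col_eq_zero he hli hij

end ChernCurvature

section Jet

variable {𝕜 F ι : Type*} [NontriviallyNormedField 𝕜] [NormedAddCommGroup F] [NormedSpace 𝕜 F]

theorem differentiableAt_iteratedDeriv_of_contDiffAt {f : 𝕜 → F} {x : 𝕜} {N : WithTop ℕ∞} {m : ℕ}
    (hf : ContDiffAt 𝕜 N f x) (hm : m < N) : DifferentiableAt 𝕜 (iteratedDeriv m f) x := by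
  rw [← differentiableWithinAt_univ, ← iteratedDerivWithin_univ]
  refine hf.contDiffWithinAt.differentiableWithinAt_iteratedDerivWithin hm ?_
  rw [Set.insert_eq_of_mem (Set.mem_univ x)]
  exact uniqueDiffOn_univ

/-- The family `σ_i^{(m)}`, `m < N`, indexed by `(m, i)`: the frame of the `(N−1)`-jet bundle of a
bundle with frame `σ`. Its Gram matrix is `jGram σ N`. -/
def jetFrame (σ : ι → 𝕜 → F) (N : ℕ) (z : 𝕜) (p : Fin N × ι) : F :=
  iteratedDeriv (p.1 : ℕ) (σ p.2) z

theorem differentiableAt_jetFrame [Finite ι] {σ : ι → 𝕜 → F} {N : ℕ} {z : 𝕜}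
    (hσ : ∀ i, ContDiffAt 𝕜 N (σ i) z) : DifferentiableAt 𝕜 (jetFrame σ N) z :=
  differentiableAt_pi.2 fun p =>
    differentiableAt_iteratedDeriv_of_contDiffAt (hσ p.2) (Nat.cast_lt.2 p.1.isLt)

theorem deriv_jetFrame_castSucc (σ : ι → 𝕜 → F) {k : ℕ} (m : Fin k) (i : ι) :
    deriv (jetFrame σ (k + 1) · (m.castSucc, i)) = (jetFrame σ (k + 1) · (m.succ, i)) :=
  iteratedDeriv_succ.symm

end Jet

theorem stmt15_general {E : Type*} [NormedAddCommGroup E] [InnerProductSpace ℂ E] {n : ℕ}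
    (k : ℕ) (σ : Fin n → ℂ → E) {z : ℂ}
    (hσ : ∀ i, ContDiffAt ℂ (k + 1 : ℕ) (σ i) z)
    (hnd : LinearIndependent ℂ
      fun p : Fin (k + 1) × Fin n => iteratedDeriv (p.1 : ℕ) (σ p.2) z) :
    (mDzbar (fun w => (jGram σ (k + 1) w)⁻¹ * mDz (jGram σ (k + 1)) w) z).rank ≤ n := by
  have hdiff : ∀ᶠ w in 𝓝 z, DifferentiableAt ℂ (jetFrame σ (k + 1)) w :=
    (Filter.eventually_all.2 fun i => (hσ i).eventually (by simp)).mono fun _ =>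
      differentiableAt_jetFrame
  have hderiv : ∀ p ∉ ({Fin.last k} ×ˢ Finset.univ : Finset (Fin (k + 1) × Fin n)),
      ∃ q, deriv (jetFrame σ (k + 1) · p) =ᶠ[𝓝 z] (jetFrame σ (k + 1) · q) := by
    rintro ⟨m, i⟩ hm
    obtain ⟨m, rfl⟩ := Fin.exists_castSucc_eq.2 (show m ≠ Fin.last k by simpa [eq_comm] using hm)
    exact ⟨(m.succ, i), .of_eq (deriv_jetFrame_castSucc σ m i)⟩
  calc (chernCurvature (fun w => gram ℂ (jetFrame σ (k + 1) w)) z).rank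
      ≤ ({Fin.last k} ×ˢ Finset.univ : Finset (Fin (k + 1) × Fin n)).card :=
        rank_chernCurvature_gram_le_card hdiff hnd _ hderiv
    _ = n := by simp

/-- The curvature coefficient `∂/∂z̄((J_k h)⁻¹·∂(J_k h)/∂z)(z)` of the `k`-jet bundle of a
`(k+1)`-nondegenerate holomorphic frame of rank `n` has rank at most `n` at every `z ∈ Ω`. -/
theorem stmt15 {n : ℕ} (Ω : Set ℂ) (hΩ : IsOpen Ω) (k : ℕ) (hk : 1 ≤ k)
    (σ : Fin n → ℂ → H) (hσ : ∀ i, DifferentiableOn ℂ (σ i) Ω)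
    (hnd : ∀ z ∈ Ω, LinearIndependent ℂ
      fun p : Fin (k + 2) × Fin n => iteratedDeriv (p.1 : ℕ) (σ p.2) z) :
    ∀ z ∈ Ω,
      (mDzbar (fun w => (jGram σ (k + 1) w)⁻¹ * mDz (jGram σ (k + 1)) w) z).rank ≤ n :=
  fun z hz => stmt15_general k σ (fun i => ((hσ i).analyticAt (hΩ.mem_nhds hz)).contDiffAt)
    ((hnd z hz).comp (Prod.map Fin.castSucc id)
      ((Fin.castSucc_injective _).prodMap Function.injective_id))
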